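/- For every real number a, the sequence of entire functions F_N(·,a), where F_N(z,a) := (cosh(z/N) + a·sinh(z/N))^N, converges to the function z ↦ e^{az} uniformly on every compact subset of ℂ as N → ∞. -/

import Mathlib

open Filter

/-!
Put `w = z / N`, `u = cosh w + a sinh w` and `v = exp (a w)`, so that `exp (a z) = v ^ N`.
The numbers `u` and `v` have the same first-order Taylor polynomial `1 + a w` at `w = 0`, hence
`‖u - v‖ = O(‖w‖²) = O(N⁻²)` uniformly for `z` in a bounded set, while both are bounded in norm by
`exp (c ‖w‖)`, whose `N`-th power `exp (c ‖z‖)` does not depend on `N`. Telescoping `u ^ N - v ^ N`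
costs only a factor `N`, so the difference of the powers is `O(N⁻¹)` uniformly.
-/

lemma norm_pow_sub_pow_le_of_norm_le {u v : ℂ} {M : ℝ} (hM : 1 ≤ M) (hu : ‖u‖ ≤ M)
    (hv : ‖v‖ ≤ M) (n : ℕ) : ‖u ^ n - v ^ n‖ ≤ n * M ^ n * ‖u - v‖ := by
  induction n with
  | zero => simp
  | succ n ih =>
    have hvn : ‖v ^ n‖ ≤ M ^ (n + 1) := by
      rw [norm_pow]
      exact (pow_le_pow_left₀ (norm_nonneg _) hv n).trans (pow_le_pow_right₀ hM n.le_succ)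
    calc ‖u ^ (n + 1) - v ^ (n + 1)‖ = ‖u * (u ^ n - v ^ n) + v ^ n * (u - v)‖ := by
          congr 1; ring
      _ ≤ ‖u‖ * ‖u ^ n - v ^ n‖ + ‖v ^ n‖ * ‖u - v‖ := by
          simpa only [norm_mul] using norm_add_le (u * (u ^ n - v ^ n)) (v ^ n * (u - v))
      _ ≤ M * (n * M ^ n * ‖u - v‖) + M ^ (n + 1) * ‖u - v‖ := by gcongr
      _ = (n + 1 : ℕ) * M ^ (n + 1) * ‖u - v‖ := by push_cast; ring

/-- The first-order Taylor remainder of `cosh w + a sinh w`, from the remainders of `exp (± w)`. -/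
lemma norm_cosh_add_mul_sinh_sub_le (a : ℝ) {w : ℂ} (hw : ‖w‖ ≤ 1) :
    ‖Complex.cosh w + a * Complex.sinh w - (1 + a * w)‖ ≤ (1 + |a|) * ‖w‖ ^ 2 := by
  have h1 := Complex.norm_exp_sub_one_sub_id_le hw
  have h2 := Complex.norm_exp_sub_one_sub_id_le (x := -w) (by simpa using hw)
  rw [norm_neg] at h2
  have e : Complex.cosh w + a * Complex.sinh w - (1 + a * w) =
      (((1 + a) / 2 : ℝ) : ℂ) * (Complex.exp w - 1 - w) +
      (((1 - a) / 2 : ℝ) : ℂ) * (Complex.exp (-w) - 1 - -w) := by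
    rw [Complex.cosh, Complex.sinh]; push_cast; ring
  have hc1 : |(1 + a) / 2| ≤ (1 + |a|) / 2 := by
    rw [abs_div, abs_two]; gcongr; simpa using abs_add_le 1 a
  have hc2 : |(1 - a) / 2| ≤ (1 + |a|) / 2 := by
    rw [abs_div, abs_two]; gcongr; simpa using abs_sub 1 a
  rw [e]
  refine (norm_add_le _ _).trans ?_
  rw [norm_mul, norm_mul, Complex.norm_real, Complex.norm_real, Real.norm_eq_abs,
    Real.norm_eq_abs]
  calc _ ≤ (1 + |a|) / 2 * ‖w‖ ^ 2 + (1 + |a|) / 2 * ‖w‖ ^ 2 := by gcongr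
    _ = _ := by ring

lemma norm_cosh_add_mul_sinh_le (a : ℝ) {w : ℂ} (hw : ‖w‖ ≤ 1) :
    ‖Complex.cosh w + a * Complex.sinh w‖ ≤ Real.exp ((1 + 2 * |a|) * ‖w‖) := by
  have h1 : ‖1 + (a : ℂ) * w‖ ≤ 1 + |a| * ‖w‖ := by
    simpa using norm_add_le 1 ((a : ℂ) * w)
  have h2 := norm_cosh_add_mul_sinh_sub_le a hw
  have h3 := norm_le_norm_add_norm_sub' (Complex.cosh w + a * Complex.sinh w) (1 + a * w)
  have h4 : (1 + |a|) * ‖w‖ ^ 2 ≤ (1 + |a|) * ‖w‖ := by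
    gcongr; nlinarith [norm_nonneg w]
  linarith [Real.add_one_le_exp ((1 + 2 * |a|) * ‖w‖)]

lemma norm_cexp_mul_le (a : ℝ) (w : ℂ) :
    ‖Complex.exp (a * w)‖ ≤ Real.exp ((1 + 2 * |a|) * ‖w‖) := by
  refine (Complex.norm_exp_le_exp_norm _).trans (Real.exp_le_exp.2 ?_)
  rw [norm_mul, Complex.norm_real, Real.norm_eq_abs]
  nlinarith [norm_nonneg w, abs_nonneg a, mul_nonneg (abs_nonneg a) (norm_nonneg w)]

theorem superoscillating_tendsto_exp (a : ℝ) (K : Set ℂ) (hK : IsCompact K) :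
    TendstoUniformlyOn
      (fun (N : ℕ) (z : ℂ) =>
        (Complex.cosh (z / N) + (a : ℂ) * Complex.sinh (z / N)) ^ N)
      (fun z => Complex.exp ((a : ℂ) * z)) atTop K := by
  obtain ⟨R, hR⟩ := hK.isBounded.exists_norm_le
  rw [Metric.tendstoUniformlyOn_iff]
  intro ε hε
  have hlim : Tendsto (fun N : ℕ =>
      Real.exp ((1 + 2 * |a|) * R) * ((1 + |a| + |a| ^ 2) * R ^ 2) / (N : ℝ)) atTop (nhds 0) :=
    tendsto_const_div_atTop_nhds_zero_nat _
  filter_upwards [hlim.eventually (gt_mem_nhds hε), eventually_ge_atTop 1,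
    tendsto_natCast_atTop_atTop.eventually_ge_atTop ((1 + |a|) * R)] with N hN hN1 hNR z hz
  have hzR := hR z hz
  have hR0 : 0 ≤ R := (norm_nonneg z).trans hzR
  have hNpos : (0 : ℝ) < N := by exact_mod_cast hN1
  have hN0 : (N : ℂ) ≠ 0 := by exact_mod_cast hNpos.ne'
  rw [dist_comm, dist_eq_norm]
  refine lt_of_le_of_lt ?_ hN
  set w : ℂ := z / N with hw
  have hwn : ‖w‖ = ‖z‖ / N := by simp [hw]
  have hbound : (1 + |a|) * ‖w‖ ≤ 1 := by
    rw [hwn, ← mul_div_assoc, div_le_one hNpos]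
    exact (by gcongr : (1 + |a|) * ‖z‖ ≤ (1 + |a|) * R).trans hNR
  have haw0 : 0 ≤ |a| * ‖w‖ := by positivity
  have hw1 : ‖w‖ ≤ 1 := by linarith
  have haw : ‖(a : ℂ) * w‖ = |a| * ‖w‖ := by simp
  have haw1 : ‖(a : ℂ) * w‖ ≤ 1 := by rw [haw]; linarith [norm_nonneg w]
  have hexp : Complex.exp (a * z) = Complex.exp (a * w) ^ N := by
    rw [← Complex.exp_nat_mul]; congr 1; rw [hw]; field_simp
  have hd : ‖Complex.cosh w + a * Complex.sinh w - Complex.exp (a * w)‖ ≤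
      (1 + |a| + |a| ^ 2) * ‖w‖ ^ 2 := by
    have h1 := norm_cosh_add_mul_sinh_sub_le a hw1
    have h2 := Complex.norm_exp_sub_one_sub_id_le haw1
    rw [haw] at h2
    have h3 := norm_sub_le (Complex.cosh w + a * Complex.sinh w - (1 + a * w))
      (Complex.exp (a * w) - 1 - a * w)
    rw [show Complex.cosh w + a * Complex.sinh w - (1 + a * w) -
      (Complex.exp (a * w) - 1 - a * w) =
      Complex.cosh w + a * Complex.sinh w - Complex.exp (a * w) by ring] at h3
    linarith
  have hMN : Real.exp ((1 + 2 * |a|) * ‖w‖) ^ N = Real.exp ((1 + 2 * |a|) * ‖z‖) := by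
    rw [← Real.exp_nat_mul, hwn]; congr 1; field_simp
  rw [hexp]
  calc _ ≤ N * Real.exp ((1 + 2 * |a|) * ‖w‖) ^ N *
        ‖Complex.cosh w + a * Complex.sinh w - Complex.exp (a * w)‖ :=
        norm_pow_sub_pow_le_of_norm_le (Real.one_le_exp (by positivity))
          (norm_cosh_add_mul_sinh_le a hw1) (norm_cexp_mul_le a w) N
    _ ≤ N * Real.exp ((1 + 2 * |a|) * ‖z‖) * ((1 + |a| + |a| ^ 2) * ‖w‖ ^ 2) := by
        rw [hMN]; gcongr
    _ = Real.exp ((1 + 2 * |a|) * ‖z‖) * ((1 + |a| + |a| ^ 2) * ‖z‖ ^ 2) / N := by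
        rw [hwn]; field_simp
    _ ≤ _ := by gcongr
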